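/- arXiv:1704.06129 — 3 statements merged into one kernel-verified Lean document; each statement's English description precedes it below -/
import Mathlib

section
/- Let ε > 0 and C' > 0, and set δ = 2^{-(2ε+1)/ε}. Suppose (E_k)_{k≥0} is a sequence of nonnegative real numbers satisfying E_k ≤ C'·2^{k(1+2ε)}·E_{k-1}^{1+ε} for every k ≥ 1, and suppose that C'·2^{1+2ε}·E_0^{ε} ≤ δ. Then E_k ≤ δ^k·E_0 for every k ≥ 0. -/
/-!
The base `δ` is chosen so that `δ ^ ε * 2 ^ (1 + 2ε) = 1`. Inserting the induction hypothesis
`E k ≤ δ ^ k * E 0` into the recurrence gives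
`E (k+1) ≤ (C' * 2 ^ (1 + 2ε) * E 0 ^ ε) * (δ ^ ε * 2 ^ (1 + 2ε)) ^ k * (δ ^ k * E 0)`:
the gain `(δ ^ ε) ^ k` from superlinearity exactly cancels the growth of the prefactor, and the
smallness of `E 0` bounds the remaining first factor by `δ`.
-/

/-- De Giorgi-type nonlinear iteration lemma: if a sequence of nonnegative
energies satisfies `E k ≤ C' * 2^(k(1+2ε)) * E (k-1)^(1+ε)` and the initial
energy is small enough, then `E k ≤ δ^k * E 0` with `δ = 2^(-(2ε+1)/ε)`. -/
theorem degiorgi_iteration (ε C' δ : ℝ) (hε : 0 < ε) (hC' : 0 < C')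
    (hδ : δ = (2 : ℝ) ^ (-(2 * ε + 1) / ε))
    (E : ℕ → ℝ) (hE : ∀ k, 0 ≤ E k)
    (hrec : ∀ k, 1 ≤ k → E k ≤ C' * (2 : ℝ) ^ ((k : ℝ) * (1 + 2 * ε)) * E (k - 1) ^ (1 + ε))
    (hinit : C' * (2 : ℝ) ^ ((1 : ℝ) + 2 * ε) * E 0 ^ ε ≤ δ) :
    ∀ k, E k ≤ δ ^ k * E 0 := by
  have hδ0 : 0 < δ := hδ ▸ Real.rpow_pos_of_pos two_pos _
  have hcancel : δ ^ ε * (2 : ℝ) ^ ((1 : ℝ) + 2 * ε) = 1 := by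
    rw [hδ, ← Real.rpow_mul two_pos.le, ← Real.rpow_add two_pos,
      div_mul_cancel₀ _ hε.ne', show -(2 * ε + 1) + (1 + 2 * ε) = 0 by ring, Real.rpow_zero]
  intro k
  induction k with
  | zero => simp
  | succ k ih =>
    have h0 : 0 ≤ δ ^ k * E 0 := mul_nonneg (pow_nonneg hδ0.le k) (hE 0)
    have hpre : (2 : ℝ) ^ (((k + 1 : ℕ) : ℝ) * (1 + 2 * ε))
        = ((2 : ℝ) ^ ((1 : ℝ) + 2 * ε)) ^ (k + 1) := by
      rw [mul_comm, Real.rpow_mul_natCast two_pos.le]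
    have hpow : (δ ^ k * E 0) ^ (1 + ε) = δ ^ k * E 0 * ((δ ^ ε) ^ k * E 0 ^ ε) := by
      rw [Real.rpow_add_of_nonneg h0 zero_le_one hε.le, Real.rpow_one,
        Real.mul_rpow (pow_nonneg hδ0.le k) (hE 0), Real.rpow_pow_comm hδ0.le]
    have hmono : E k ^ (1 + ε) ≤ (δ ^ k * E 0) ^ (1 + ε) :=
      Real.rpow_le_rpow (hE k) ih (by linarith)
    calc E (k + 1)
        ≤ C' * (2 : ℝ) ^ (((k + 1 : ℕ) : ℝ) * (1 + 2 * ε)) * E k ^ (1 + ε) :=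
          hrec (k + 1) (Nat.le_add_left 1 k)
      _ ≤ C' * (2 : ℝ) ^ (((k + 1 : ℕ) : ℝ) * (1 + 2 * ε)) * (δ ^ k * E 0) ^ (1 + ε) :=
          mul_le_mul_of_nonneg_left hmono (by positivity)
      _ = (C' * (2 : ℝ) ^ ((1 : ℝ) + 2 * ε) * E 0 ^ ε)
            * (δ ^ ε * (2 : ℝ) ^ ((1 : ℝ) + 2 * ε)) ^ k * (δ ^ k * E 0) := by
          rw [hpre, hpow, mul_pow]; ring
      _ ≤ δ * (δ ^ k * E 0) := by
          rw [hcancel, one_pow, mul_one]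
          exact mul_le_mul_of_nonneg_right hinit h0
      _ = δ ^ (k + 1) * E 0 := by ring
end

section
/- Let ε > 0, K ≥ 0, B ≥ 0, and β ∈ (0,1) satisfy 8·β^ε ≤ 1 and K·B^ε ≤ β^{3+3ε}. Suppose (E_k)_{k≥0} is a sequence of nonnegative real numbers with E_j ≤ β^j·B for j ∈ {0,1,2} and E_k ≤ K·2^{3k}·E_{k-3}^{1+ε} for every k ≥ 3. Then E_k ≤ β^k·B for every k ≥ 0. -/
/-! The ansatz at `m` turns the recurrence into
`E (m + 3) ≤ K * 8 ^ (m + 3) * (β ^ m * B) ^ (1 + ε)`. Splitting off one power of `β ^ m * B` and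
spending `K * B ^ ε ≤ β ^ (3 + 3 * ε)`, the right-hand side is at most
`(8 * β ^ ε) ^ (m + 3) * (β ^ (m + 3) * B)`: the factor `β ^ 3` moves the geometric bound forward
by the three-step shift, and `β ^ (3 * ε)` completes `(β ^ ε) ^ m` to the exponent `m + 3`, so that
`8 * β ^ ε ≤ 1` absorbs the growth `8 ^ (m + 3)`. -/

/-- The inductive core of the small mean energy proposition: the localized
truncated energies satisfy a nonlinear recurrence with a three-step shift and
the geometric ansatz `E k ≤ β^k · B` propagates by induction once `β` is
small enough. -/
theorem degiorgi_iteration_shift (ε K B β : ℝ) (E : ℕ → ℝ)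
    (hε : 0 < ε) (hK : 0 ≤ K) (hB : 0 ≤ B)
    (hβ : β ∈ Set.Ioo (0 : ℝ) 1)
    (h8 : 8 * β ^ ε ≤ 1)
    (hKB : K * B ^ ε ≤ β ^ ((3 : ℝ) + 3 * ε))
    (hE : ∀ k, 0 ≤ E k)
    (hinit : ∀ j, j ≤ 2 → E j ≤ β ^ j * B)
    (hrec : ∀ k, 3 ≤ k → E k ≤ K * 2 ^ (3 * k) * E (k - 3) ^ (1 + ε)) :
    ∀ k, E k ≤ β ^ k * B := by
  obtain ⟨hβ0, -⟩ := hβ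
  -- The bound at `m + 3` uses only the bound at `m`, so strong induction is needed.
  intro k
  induction k using Nat.strong_induction_on with
  | _ k ih =>
  by_cases hk : k ≤ 2
  · exact hinit k hk
  obtain ⟨m, rfl⟩ : ∃ m, k = m + 3 := ⟨k - 3, by omega⟩
  have hm : E m ≤ β ^ m * B := ih m (by omega)
  have hr : E (m + 3) ≤ K * 2 ^ (3 * (m + 3)) * E m ^ (1 + ε) := by
    simpa using hrec (m + 3) (by omega)
  have hq : 0 ≤ β ^ ε := Real.rpow_nonneg hβ0.le ε
  have hsplit : β ^ ((3 : ℝ) + 3 * ε) = β ^ 3 * (β ^ ε) ^ 3 := by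
    rw [Real.rpow_add hβ0, mul_comm 3 ε, Real.rpow_mul hβ0.le]
    norm_cast
  have hpow : (β ^ m * B) ^ (1 + ε) = β ^ m * (β ^ ε) ^ m * (B * B ^ ε) := by
    have h1 : (β ^ m * B) ^ (1 + ε) = (β ^ m * B) * (β ^ m * B) ^ ε := by
      rw [Real.rpow_add_of_nonneg (by positivity) zero_le_one hε.le, Real.rpow_one]
    rw [h1, Real.mul_rpow (by positivity) hB, Real.rpow_pow_comm hβ0.le]
    ring
  have h8' : (2 : ℝ) ^ (3 * (m + 3)) = 8 ^ (m + 3) := by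
    rw [pow_mul]; norm_num
  calc E (m + 3) ≤ K * 2 ^ (3 * (m + 3)) * E m ^ (1 + ε) := hr
    _ ≤ K * 2 ^ (3 * (m + 3)) * (β ^ m * B) ^ (1 + ε) := by
        gcongr
        exact hE m
    _ = (K * B ^ ε) * (8 ^ (m + 3) * (β ^ m * (β ^ ε) ^ m * B)) := by
        rw [hpow, h8']; ring
    _ ≤ β ^ ((3 : ℝ) + 3 * ε) * (8 ^ (m + 3) * (β ^ m * (β ^ ε) ^ m * B)) := by
        gcongr
    _ = (8 * β ^ ε) ^ (m + 3) * (β ^ (m + 3) * B) := by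
        rw [hsplit, mul_pow]; ring
    _ ≤ β ^ (m + 3) * B :=
        mul_le_of_le_one_left (by positivity) (pow_le_one₀ (by positivity) h8)
end

section
/- For every integer N ≥ 2 there exists a constant C_N > 0 with the following property: for every h > 0 and every function f : ℝ^N → ℝ that is continuously differentiable on an open neighborhood of the closed ball B̄_h = {x ∈ ℝ^N : ‖x‖ ≤ h}, the sets A = {x ∈ B̄_h : f(x) ≤ 0}, ℬ = {x ∈ B̄_h : f(x) ≥ 1}, and 𝒞 = {x ∈ B̄_h : 0 < f(x) < 1} satisfy |A|·|ℬ| ≤ C_N · h^{N+1} · ( ∫_{B̄_h} ‖∇f(x)‖² dx )^{1/2} · |𝒞|^{1/2}, where |·| denotes N-dimensional Lebesgue measure and ∇f the gradient of f. -/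
open MeasureTheory Metric

/-!
Write `K` for the closed ball of radius `h`, and let `G` be the function equal to `‖∇f‖` on the
intermediate set `{x ∈ K | 0 < f x < 1}` and to `0` elsewhere.

If `x, y ∈ K` satisfy `f x ≤ 0` and `1 ≤ f y`, then along the segment from `x` to `y` the function
`f` takes every value in `(0, 1)`. The image of a set under a one-variable function has measure at
most the integral of the absolute derivative over that set, so
`1 ≤ 2h ∫₀¹ G (x + t (y - x)) dt` (`one_le_lintegral_segment`).

Integrating over all such pairs gives
`|A| |B| ≤ 2h ∫₀¹ ∫_A ∫_B G ((1 - t) x + t y) dy dx dt`. For `t ≥ 1/2`, the substitution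
`z = (1 - t) x + t y` in the variable `y` has Jacobian `t ^ N ≥ 2 ^ (-N)`; for `t ≤ 1/2` the same
holds in the variable `x`. Hence the triple integral is at most `2 ^ N |K| ∫ G`
(`lintegral_segments_le`), with `|K|` proportional to `h ^ N`. The Cauchy–Schwarz inequality bounds
`∫ G` by `(∫_K ‖∇f‖²)^(1/2)` times the square root of the measure of the intermediate set.
All integrals are taken in `[0, ∞]`, so that integrability only matters at the very end.
-/

lemma measurableSet_crossing {X : Type*} [TopologicalSpace X] [MeasurableSpace X] [BorelSpace X]
    {K : Set X} (hK : IsClosed K) {f : X → ℝ} (hc : ContinuousOn f K) :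
    MeasurableSet {x ∈ K | 0 < f x ∧ f x < 1} := by
  have hA : MeasurableSet (K ∩ f ⁻¹' Set.Iic 0) :=
    (hc.preimage_isClosed_of_isClosed hK isClosed_Iic).measurableSet
  have hB : MeasurableSet (K ∩ f ⁻¹' Set.Ici 1) :=
    (hc.preimage_isClosed_of_isClosed hK isClosed_Ici).measurableSet
  have : {x ∈ K | 0 < f x ∧ f x < 1} = (K \ (K ∩ f ⁻¹' Set.Iic 0)) \ (K ∩ f ⁻¹' Set.Ici 1) := by
    ext x
    simp only [Set.mem_ofPred_eq, Set.mem_sdiff, Set.mem_inter_iff, Set.mem_preimage, Set.mem_Iic,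
      Set.mem_Ici, not_and, not_le]
    tauto
  rw [this]
  exact (hK.measurableSet.diff hA).diff hB

/-- The total variation of `φ` inside the strip `0 < φ < 1` is at least `1` when `φ` crosses it. -/
lemma one_le_lintegral_crossing (φ φ' : ℝ → ℝ) (h0 : φ 0 ≤ 0) (h1 : 1 ≤ φ 1)
    (hd : ∀ t ∈ Set.Icc (0 : ℝ) 1, HasDerivAt φ (φ' t) t) :
    1 ≤ ∫⁻ t in {t ∈ Set.Icc (0 : ℝ) 1 | 0 < φ t ∧ φ t < 1}, ENNReal.ofReal |φ' t| := by
  have hc : ContinuousOn φ (Set.Icc 0 1) := fun t ht => (hd t ht).continuousAt.continuousWithinAt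
  have hm := measurableSet_crossing isClosed_Icc hc
  have key := addHaar_image_le_lintegral_abs_det_fderiv (f := φ)
    (f' := fun t => ContinuousLinearMap.toSpanSingleton ℝ (φ' t)) volume hm
    (fun t ht => ((hd t ht.1).hasFDerivAt).hasFDerivWithinAt)
  simp only [ContinuousLinearMap.det_toSpanSingleton] at key
  refine le_trans ?_ key
  have hsub : Set.Ioo (0 : ℝ) 1 ⊆ φ '' {t ∈ Set.Icc (0 : ℝ) 1 | 0 < φ t ∧ φ t < 1} := by
    intro v hv
    obtain ⟨t, ht, rfl⟩ := intermediate_value_Ioo zero_le_one hc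
      ⟨h0.trans_lt hv.1, hv.2.trans_le h1⟩
    exact ⟨t, ⟨Set.Ioo_subset_Icc_self ht, hv⟩, rfl⟩
  calc (1 : ENNReal) = volume (Set.Ioo (0 : ℝ) 1) := by simp
    _ ≤ _ := measure_mono hsub

section

variable {N : ℕ}

local notation "E" => EuclideanSpace ℝ (Fin N)

lemma lintegral_comp_smul_add_le (G : E → ENNReal) (hG : Measurable G) (s : ℝ) (hs : 1 / 2 ≤ s)
    (w : E) : ∫⁻ x, G (s • x + w) ≤ 2 ^ N * ∫⁻ x, G x := by
  have hs0 : 0 < s := by linarith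
  have h1 : ∫⁻ x, G (s • x + w) = ∫⁻ z, G (z + w) ∂(Measure.map (fun x : E => s • x) volume) := by
    rw [lintegral_map (by fun_prop) (by fun_prop)]
  rw [h1, Measure.map_addHaar_smul volume hs0.ne', lintegral_smul_measure,
    lintegral_add_right_eq_self, smul_eq_mul]
  gcongr
  have h2 : (s ^ N)⁻¹ ≤ 2 ^ N := by
    rw [← inv_pow]
    gcongr
    rw [inv_le_comm₀ hs0 (by norm_num)]
    linarith
  rw [finrank_euclideanSpace_fin, abs_of_pos (by positivity)]
  calc ENNReal.ofReal (s ^ N)⁻¹ ≤ ENNReal.ofReal (2 ^ N) := ENNReal.ofReal_le_ofReal h2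
    _ = 2 ^ N := by rw [ENNReal.ofReal_pow (by norm_num)]; simp

/-- The integral of `G` over all segments joining `A` to `B` is controlled by `∫ G`: at each time
`t`, one of the two endpoints carries a weight at least `1 / 2` and can be traded for the point on
the segment. -/
lemma lintegral_segments_le (G : E → ENNReal) (hG : Measurable G) (A B K : Set E)
    (hA : A ⊆ K) (hB : B ⊆ K) :
    ∫⁻ x in A, ∫⁻ y in B, ∫⁻ t in Set.Icc (0 : ℝ) 1, G (x + t • (y - x)) ≤
      2 ^ N * (∫⁻ z, G z) * volume K := by
  have hmeas : Measurable (fun p : (E × ℝ) × E => G (p.1.1 + p.1.2 • (p.2 - p.1.1))) :=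
    hG.comp (by fun_prop)
  have hswap : ∫⁻ x in A, ∫⁻ y in B, ∫⁻ t in Set.Icc (0 : ℝ) 1, G (x + t • (y - x)) =
      ∫⁻ t in Set.Icc (0 : ℝ) 1, ∫⁻ x in A, ∫⁻ y in B, G (x + t • (y - x)) := by
    rw [lintegral_lintegral_swap (f := fun (t : ℝ) (x : E) => ∫⁻ y in B, G (x + t • (y - x)))]
    · refine lintegral_congr fun x => ?_
      rw [lintegral_lintegral_swap]
      exact (hG.comp (by fun_prop :
        Measurable fun p : E × ℝ => x + p.2 • (p.1 - x))).aemeasurable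
    · exact ((Measurable.lintegral_prod_right' (ν := volume.restrict B) hmeas).comp
        measurable_swap).aemeasurable
  have hfix : ∀ t : ℝ, ∫⁻ x in A, ∫⁻ y in B, G (x + t • (y - x)) ≤
      2 ^ N * (∫⁻ z, G z) * volume K := by
    intro t
    rcases le_total (1 / 2) t with ht | ht
    · calc ∫⁻ x in A, ∫⁻ y in B, G (x + t • (y - x))
          ≤ ∫⁻ x in A, 2 ^ N * ∫⁻ z, G z := by
            refine lintegral_mono fun x => ?_
            refine (setLIntegral_le_lintegral _ _).trans ?_
            refine le_trans (le_of_eq ?_) (lintegral_comp_smul_add_le G hG t ht ((1 - t) • x))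
            refine lintegral_congr fun y => ?_
            congr 1; module
        _ = 2 ^ N * (∫⁻ z, G z) * volume A := setLIntegral_const _ _
        _ ≤ _ := by gcongr
    · rw [lintegral_lintegral_swap (f := fun x y => G (x + t • (y - x)))
        (hG.comp (by fun_prop : Measurable fun p : E × E => p.1 + t • (p.2 - p.1))).aemeasurable]
      calc ∫⁻ y in B, ∫⁻ x in A, G (x + t • (y - x))
          ≤ ∫⁻ y in B, 2 ^ N * ∫⁻ z, G z := by
            refine lintegral_mono fun y => ?_
            refine (setLIntegral_le_lintegral _ _).trans ?_
            refine le_trans (le_of_eq ?_)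
              (lintegral_comp_smul_add_le G hG (1 - t) (by linarith) (t • y))
            refine lintegral_congr fun x => ?_
            congr 1; module
        _ = 2 ^ N * (∫⁻ z, G z) * volume B := setLIntegral_const _ _
        _ ≤ _ := by gcongr
  rw [hswap]
  calc _ ≤ ∫⁻ t in Set.Icc (0 : ℝ) 1, 2 ^ N * (∫⁻ z, G z) * volume K :=
        lintegral_mono fun t => hfix t
    _ = _ := by rw [setLIntegral_const]; simp

/-- The crossing estimate along the segment from `x` to `y`, whose length is at most `2 * h`. -/
lemma one_le_lintegral_segment (h : ℝ) (f : E → ℝ)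
    (hf : ∀ z ∈ closedBall (0 : E) h, DifferentiableAt ℝ f z) (x y : E)
    (hx : x ∈ closedBall (0 : E) h) (hy : y ∈ closedBall (0 : E) h) (hfx : f x ≤ 0)
    (hfy : 1 ≤ f y) :
    1 ≤ ENNReal.ofReal (2 * h) * ∫⁻ t in Set.Icc (0 : ℝ) 1,
      Set.indicator {z ∈ closedBall (0 : E) h | 0 < f z ∧ f z < 1}
        (fun z => ‖fderiv ℝ f z‖ₑ) (x + t • (y - x)) := by
  have hseg : ∀ t ∈ Set.Icc (0 : ℝ) 1, x + t • (y - x) ∈ closedBall (0 : E) h :=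
    fun t ht => (convex_closedBall (0 : E) h).add_smul_sub_mem hx hy ht
  have hd : ∀ t ∈ Set.Icc (0 : ℝ) 1, HasDerivAt (fun t : ℝ => f (x + t • (y - x)))
      (fderiv ℝ f (x + t • (y - x)) (y - x)) t := by
    intro t ht
    have h2 : HasDerivAt (fun t : ℝ => x + t • (y - x)) (y - x) t := by
      simpa using ((hasDerivAt_id t).smul_const (y - x)).const_add x
    exact (hf _ (hseg t ht)).hasFDerivAt.comp_hasDerivAt t h2
  have key := one_le_lintegral_crossing (fun t : ℝ => f (x + t • (y - x)))
    (fun t => fderiv ℝ f (x + t • (y - x)) (y - x)) (by simpa using hfx) (by simpa using hfy) hd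
  have hxy : ‖y - x‖ ≤ 2 * h := by
    rw [mem_closedBall_zero_iff] at hx hy
    linarith [norm_sub_le y x]
  rw [← lintegral_const_mul' _ _ ENNReal.ofReal_ne_top]
  refine key.trans ?_
  set S := {t ∈ Set.Icc (0 : ℝ) 1 | 0 < f (x + t • (y - x)) ∧ f (x + t • (y - x)) < 1} with hS
  have hSm : MeasurableSet S := measurableSet_crossing isClosed_Icc
    fun t ht => (hd t ht).continuousAt.continuousWithinAt
  refine le_trans (setLIntegral_mono' hSm fun t ht => ?_)
    (lintegral_mono_set (fun t ht => ht.1 : S ⊆ Set.Icc 0 1))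
  rw [Set.indicator_of_mem (show _ ∈ {z ∈ closedBall (0 : E) h | 0 < f z ∧ f z < 1} from
    ⟨hseg t ht.1, ht.2⟩), ← Real.norm_eq_abs, ← ofReal_norm,
    ← ENNReal.ofReal_mul ((norm_nonneg _).trans hxy)]
  apply ENNReal.ofReal_le_ofReal
  refine (ContinuousLinearMap.le_opNorm _ _).trans ?_
  rw [mul_comm]
  gcongr

/-- The isoperimetric inequality with all quantities in `[0, ∞]`. -/
lemma degiorgi_ennreal (h : ℝ) (f : E → ℝ)
    (hf : ∀ z ∈ closedBall (0 : E) h, DifferentiableAt ℝ f z) :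
    volume {x ∈ closedBall (0 : E) h | f x ≤ 0} * volume {x ∈ closedBall (0 : E) h | 1 ≤ f x} ≤
      ENNReal.ofReal (2 * h) * (2 ^ N *
        ((∫⁻ x in closedBall (0 : E) h, ‖fderiv ℝ f x‖ₑ ^ 2) ^ ((1 : ℝ) / 2) *
        volume {x ∈ closedBall (0 : E) h | 0 < f x ∧ f x < 1} ^ ((1 : ℝ) / 2)) *
        volume (closedBall (0 : E) h)) := by
  set K := closedBall (0 : E) h with hK
  have hc : ContinuousOn f K := fun z hz => (hf z hz).continuousAt.continuousWithinAt
  have hKc : IsClosed K := isClosed_closedBall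
  have hAm : MeasurableSet {x ∈ K | f x ≤ 0} :=
    (hc.preimage_isClosed_of_isClosed hKc isClosed_Iic).measurableSet
  have hBm : MeasurableSet {x ∈ K | 1 ≤ f x} :=
    (hc.preimage_isClosed_of_isClosed hKc isClosed_Ici).measurableSet
  have hCm := measurableSet_crossing hKc hc
  set A := {x ∈ K | f x ≤ 0} with hA
  set B := {x ∈ K | 1 ≤ f x} with hB
  set C := {x ∈ K | 0 < f x ∧ f x < 1} with hC
  have hF : Measurable (fun z => ‖fderiv ℝ f z‖ₑ) := (measurable_fderiv ℝ f).enorm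
  set G : E → ENNReal := C.indicator (fun z => ‖fderiv ℝ f z‖ₑ) with hGdef
  have hG : Measurable G := hF.indicator hCm
  have hCS : ∫⁻ z, G z ≤ (∫⁻ x in K, ‖fderiv ℝ f x‖ₑ ^ 2) ^ ((1 : ℝ) / 2) *
      volume C ^ ((1 : ℝ) / 2) := by
    have := ENNReal.lintegral_mul_le_Lp_mul_Lq (volume.restrict C) Real.HolderConjugate.two_two
      hF.aemeasurable (aemeasurable_const (b := (1 : ENNReal)))
    rw [hGdef, lintegral_indicator hCm]
    simp only [Pi.mul_apply, mul_one, lintegral_const,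
      Measure.restrict_apply_univ, one_pow, one_mul, ENNReal.rpow_two] at this
    refine this.trans ?_
    gcongr
    exact fun x hx => hx.1
  calc volume A * volume B = ∫⁻ x in A, ∫⁻ y in B, 1 := by simp [mul_comm]
    _ ≤ ∫⁻ x in A, ∫⁻ y in B, ENNReal.ofReal (2 * h) *
          ∫⁻ t in Set.Icc (0 : ℝ) 1, G (x + t • (y - x)) :=
        setLIntegral_mono' hAm fun x hx => setLIntegral_mono' hBm fun y hy =>
          one_le_lintegral_segment h f hf x y hx.1 hy.1 hx.2 hy.2
    _ = ENNReal.ofReal (2 * h) *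
          ∫⁻ x in A, ∫⁻ y in B, ∫⁻ t in Set.Icc (0 : ℝ) 1, G (x + t • (y - x)) := by
        simp_rw [lintegral_const_mul' _ _ ENNReal.ofReal_ne_top]
    _ ≤ ENNReal.ofReal (2 * h) * (2 ^ N * (∫⁻ z, G z) * volume K) := by
        gcongr
        exact lintegral_segments_le G hG A B K (fun x hx => hx.1) (fun x hx => hx.1)
    _ ≤ _ := by gcongr

end

/-- De Giorgi's isoperimetric inequality on a ball of radius `h` in `ℝ^N`,
with the explicit dependence on the scale `h`. -/
theorem degiorgi_isoperimetric (N : ℕ) (hN : 2 ≤ N) :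
    ∃ C > (0 : ℝ), ∀ h : ℝ, 0 < h →
      ∀ f : EuclideanSpace ℝ (Fin N) → ℝ, ∀ U : Set (EuclideanSpace ℝ (Fin N)),
        IsOpen U → closedBall (0 : EuclideanSpace ℝ (Fin N)) h ⊆ U →
        ContDiffOn ℝ 1 f U →
        (volume {x ∈ closedBall (0 : EuclideanSpace ℝ (Fin N)) h | f x ≤ 0}).toReal *
          (volume {x ∈ closedBall (0 : EuclideanSpace ℝ (Fin N)) h | 1 ≤ f x}).toReal ≤
        C * h ^ (N + 1) *
          (∫ x in closedBall (0 : EuclideanSpace ℝ (Fin N)) h, ‖gradient f x‖ ^ 2) ^ ((1 : ℝ) / 2) *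
          ((volume {x ∈ closedBall (0 : EuclideanSpace ℝ (Fin N)) h |
              0 < f x ∧ f x < 1}).toReal) ^ ((1 : ℝ) / 2) := by
  refine ⟨2 ^ (N + 1) * (volume (ball (0 : EuclideanSpace ℝ (Fin N)) 1)).toReal,
    mul_pos (by positivity) (ENNReal.toReal_pos (measure_ball_pos volume _ one_pos).ne'
      measure_ball_lt_top.ne), ?_⟩
  intro h hh f U hU hKU hfU
  have key := degiorgi_ennreal h f fun z hz =>
    (hfU.differentiableOn one_ne_zero).differentiableAt (hU.mem_nhds (hKU hz))
  have hcont : ContinuousOn (fun x => ‖fderiv ℝ f x‖ ^ 2)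
      (closedBall (0 : EuclideanSpace ℝ (Fin N)) h) :=
    (((hfU.continuousOn_fderiv_of_isOpen hU le_rfl).mono hKU).norm).pow 2
  have hint := hcont.integrableOn_compact (μ := volume) (isCompact_closedBall _ _)
  have hL : ∫⁻ x in closedBall (0 : EuclideanSpace ℝ (Fin N)) h, ‖fderiv ℝ f x‖ₑ ^ 2 =
      ENNReal.ofReal (∫ x in closedBall (0 : EuclideanSpace ℝ (Fin N)) h, ‖gradient f x‖ ^ 2) := by
    have hg : ∀ x, ‖gradient f x‖ = ‖fderiv ℝ f x‖ := fun x => by simp [gradient]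
    simp_rw [hg]
    rw [ofReal_integral_eq_lintegral_ofReal hint (Filter.Eventually.of_forall fun x => by positivity)]
    refine lintegral_congr fun x => ?_
    rw [ENNReal.ofReal_pow (norm_nonneg _), ofReal_norm]
  have hI : 0 ≤ ∫ x in closedBall (0 : EuclideanSpace ℝ (Fin N)) h, ‖gradient f x‖ ^ 2 :=
    integral_nonneg fun x => by positivity
  have hCfin : volume {x ∈ closedBall (0 : EuclideanSpace ℝ (Fin N)) h | 0 < f x ∧ f x < 1} ≠ ⊤ :=
    measure_ne_top_of_subset (fun x hx => hx.1) measure_closedBall_lt_top.ne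
  rw [hL, Measure.addHaar_closedBall _ _ hh.le, finrank_euclideanSpace_fin] at key
  have key' := ENNReal.toReal_mono (by
    have := (measure_ball_lt_top (μ := volume) (x := (0 : EuclideanSpace ℝ (Fin N))) (r := 1)).ne
    have h1 := ENNReal.rpow_ne_top_of_nonneg (by norm_num : (0 : ℝ) ≤ 1 / 2) hCfin
    have h2 := ENNReal.rpow_ne_top_of_nonneg (by norm_num : (0 : ℝ) ≤ 1 / 2)
      (ENNReal.ofReal_ne_top (r := ∫ x in closedBall (0 : EuclideanSpace ℝ (Fin N)) h,
        ‖gradient f x‖ ^ 2))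
    finiteness) key
  simp only [ENNReal.toReal_mul, ENNReal.toReal_pow, ← ENNReal.toReal_rpow, ENNReal.toReal_ofNat,
    ENNReal.toReal_ofReal hI, ENNReal.toReal_ofReal (by positivity : 0 ≤ 2 * h),
    ENNReal.toReal_ofReal (by positivity : 0 ≤ h ^ N)] at key'
  refine key'.trans (le_of_eq ?_)
  ring
end
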